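/- Let (Y, dy) be a σ-finite measure space, let E*, Ê : Y → ℝ be measurable with E*(y) ≥ 0 for all y, let 0 < ξ < log 2 satisfy |E*(y) − Ê(y)| < ξ for all y ∈ Y, and suppose Z* = ∫_Y e^{-E*(y)} dy ∈ (0, ∞). Define the Boltzmann densities q*(y) = e^{-E*(y)}/Z* and q̂(y) = e^{-Ê(y)}/Ẑ with Ẑ = ∫_Y e^{-Ê(y)} dy. Then for every y ∈ Y, |q*(y) − q̂(y)| ≤ 2(e^{ξ} − 1) / ((2 − e^{ξ}) Z*). -/

import Mathlib

open MeasureTheory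

/-!
If two energies differ by at most `ξ`, their Boltzmann weights agree up to a factor `e^ξ`, and by
integration so do their partition functions. Hence the two densities agree up to a factor `e^{2ξ}`,
so they differ by at most `e^{2ξ} - 1` times the smaller one. The density of a nonnegative energy is
at most `1 / Z`, and `(1 + t)(2 - t) ≤ 2` for `t = e^ξ ≥ 1` gives `t² - 1 ≤ 2(t - 1)/(2 - t)`.
-/

/-- The partition function `Z = ∫ e^{-E} dμ` of the energy `E`. As a Bochner integral it is `0`,
rather than infinite, when `e^{-E}` is not integrable. -/
noncomputable def partitionFunction {Y : Type*} [MeasurableSpace Y] (μ : Measure Y) (E : Y → ℝ) :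
    ℝ :=
  ∫ y, Real.exp (-E y) ∂μ

/-- The Boltzmann density `e^{-E(y)} / Z` with respect to `μ` of the energy `E`; identically `0`
when the partition function is `0`. -/
noncomputable def boltzmannDensity {Y : Type*} [MeasurableSpace Y] (μ : Measure Y) (E : Y → ℝ)
    (y : Y) : ℝ :=
  Real.exp (-E y) / partitionFunction μ E

lemma abs_sub_le_sub_one_mul_min {R : Type*} [Ring R] [LinearOrder R] [IsOrderedAddMonoid R]
    {a b s : R} (hab : a ≤ s * b) (hba : b ≤ s * a) : |a - b| ≤ (s - 1) * min a b := by
  rcases le_total a b with h | h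
  · rw [abs_sub_comm, abs_of_nonneg (sub_nonneg.mpr h), min_eq_left h, sub_one_mul]
    exact sub_le_sub_right hba a
  · rw [abs_of_nonneg (sub_nonneg.mpr h), min_eq_right h, sub_one_mul]
    exact sub_le_sub_right hab b

lemma exp_neg_le_exp_mul_exp_neg {x y ξ : ℝ} (h : y - x ≤ ξ) :
    Real.exp (-x) ≤ Real.exp ξ * Real.exp (-y) := by
  rw [← Real.exp_add]
  exact Real.exp_le_exp.mpr (by linarith)

lemma exp_two_mul_sub_one_le {ξ : ℝ} (hξ : 0 ≤ ξ) (hξ_lt : ξ < Real.log 2) :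
    Real.exp (2 * ξ) - 1 ≤ 2 * (Real.exp ξ - 1) / (2 - Real.exp ξ) := by
  have one_le : 1 ≤ Real.exp ξ := Real.one_le_exp hξ
  have lt_two : Real.exp ξ < 2 := (Real.lt_log_iff_exp_lt two_pos).mp hξ_lt
  have key : (1 + Real.exp ξ) * (2 - Real.exp ξ) ≤ 2 := by nlinarith
  rw [le_div_iff₀ (sub_pos.mpr lt_two)]
  calc (Real.exp (2 * ξ) - 1) * (2 - Real.exp ξ)
      = (Real.exp ξ - 1) * ((1 + Real.exp ξ) * (2 - Real.exp ξ)) := by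
        rw [two_mul, Real.exp_add]; ring
    _ ≤ (Real.exp ξ - 1) * 2 := mul_le_mul_of_nonneg_left key (sub_nonneg.mpr one_le)
    _ = 2 * (Real.exp ξ - 1) := mul_comm _ _

lemma exp_two_mul_sub_one_mul_le {ξ p Z : ℝ} (hξ : 0 ≤ ξ) (hξ_lt : ξ < Real.log 2) (hZ : 0 ≤ Z)
    (hp : p ≤ 1 / Z) :
    (Real.exp (2 * ξ) - 1) * p ≤ 2 * (Real.exp ξ - 1) / ((2 - Real.exp ξ) * Z) := by
  have factor_nonneg : 0 ≤ Real.exp (2 * ξ) - 1 := sub_nonneg.mpr (Real.one_le_exp (by positivity))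
  rw [div_mul_eq_div_mul_one_div]
  exact mul_le_mul_of_nonneg (exp_two_mul_sub_one_le hξ hξ_lt) hp factor_nonneg
    (one_div_nonneg.mpr hZ)

section Boltzmann

variable {Y : Type*} [MeasurableSpace Y] {μ : Measure Y} {E F : Y → ℝ} {ξ : ℝ} {y : Y}

lemma partitionFunction_nonneg : 0 ≤ partitionFunction μ E :=
  integral_nonneg fun _ => (Real.exp_pos _).le

lemma boltzmannDensity_le_one_div (hy : 0 ≤ E y) :
    boltzmannDensity μ E y ≤ 1 / partitionFunction μ E :=
  div_le_div_of_nonneg_right (Real.exp_le_one_iff.mpr (neg_nonpos.mpr hy)) partitionFunction_nonneg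

lemma integrable_exp_neg_of_sub_le (hE : Integrable (fun y => Real.exp (-E y)) μ)
    (hF : AEMeasurable F μ) (hEF : ∀ᵐ y ∂μ, E y - F y ≤ ξ) :
    Integrable (fun y => Real.exp (-F y)) μ := by
  refine (hE.const_mul (Real.exp ξ)).mono' hF.neg.exp.aestronglyMeasurable ?_
  filter_upwards [hEF] with y hy
  rw [Real.norm_eq_abs, Real.abs_exp]
  exact exp_neg_le_exp_mul_exp_neg hy

lemma partitionFunction_le_exp_mul (hE : Integrable (fun y => Real.exp (-E y)) μ)
    (hEF : ∀ᵐ y ∂μ, E y - F y ≤ ξ) :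
    partitionFunction μ F ≤ Real.exp ξ * partitionFunction μ E := by
  rw [partitionFunction, partitionFunction, ← integral_const_mul]
  exact integral_mono_of_nonneg (.of_forall fun _ => (Real.exp_pos _).le) (hE.const_mul _)
    (hEF.mono fun _ => exp_neg_le_exp_mul_exp_neg)

lemma boltzmannDensity_le_exp_two_mul (hE : Integrable (fun y => Real.exp (-E y)) μ)
    (hF_pos : 0 < partitionFunction μ F) (hEF : ∀ᵐ y ∂μ, E y - F y ≤ ξ) (hy : F y - E y ≤ ξ) :
    boltzmannDensity μ E y ≤ Real.exp (2 * ξ) * boltzmannDensity μ F y := by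
  have hZ : partitionFunction μ F ≤ Real.exp ξ * partitionFunction μ E :=
    partitionFunction_le_exp_mul hE hEF
  have hE_pos : 0 < partitionFunction μ E :=
    pos_of_mul_pos_right (hF_pos.trans_le hZ) (Real.exp_pos ξ).le
  rw [boltzmannDensity, boltzmannDensity, ← mul_div_assoc, div_le_div_iff₀ hE_pos hF_pos]
  calc Real.exp (-E y) * partitionFunction μ F
      ≤ (Real.exp ξ * Real.exp (-F y)) * (Real.exp ξ * partitionFunction μ E) :=
        mul_le_mul (exp_neg_le_exp_mul_exp_neg hy) hZ hF_pos.le (by positivity)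
    _ = Real.exp (2 * ξ) * Real.exp (-F y) * partitionFunction μ E := by
        rw [two_mul, Real.exp_add]; ring

theorem boltzmann_density_perturbation_general (hE : Integrable (fun y => Real.exp (-E y)) μ)
    (hE_pos : 0 < partitionFunction μ E) (hF : AEMeasurable F μ)
    (hEF : ∀ᵐ y ∂μ, |E y - F y| ≤ ξ) (hy : |E y - F y| ≤ ξ) :
    |boltzmannDensity μ E y - boltzmannDensity μ F y| ≤
      (Real.exp (2 * ξ) - 1) * min (boltzmannDensity μ E y) (boltzmannDensity μ F y) := by
  have hE_sub_F : ∀ᵐ y ∂μ, E y - F y ≤ ξ := hEF.mono fun _ h => (abs_sub_le_iff.mp h).1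
  have hF_sub_E : ∀ᵐ y ∂μ, F y - E y ≤ ξ := hEF.mono fun _ h => (abs_sub_le_iff.mp h).2
  have hF_int : Integrable (fun y => Real.exp (-F y)) μ :=
    integrable_exp_neg_of_sub_le hE hF hE_sub_F
  have hF_pos : 0 < partitionFunction μ F :=
    pos_of_mul_pos_right (hE_pos.trans_le (partitionFunction_le_exp_mul hF_int hF_sub_E))
      (Real.exp_pos ξ).le
  exact abs_sub_le_sub_one_mul_min
    (boltzmannDensity_le_exp_two_mul hE hF_pos hE_sub_F (abs_sub_le_iff.mp hy).2)
    (boltzmannDensity_le_exp_two_mul hF_int hE_pos hF_sub_E (abs_sub_le_iff.mp hy).1)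

end Boltzmann

/-- With `E* ≥ 0`, `0 < ξ < log 2`, `|E* − Ê| < ξ` pointwise, and
`Z* = ∫ e^{-E*} dμ ∈ (0,∞)`, the Boltzmann densities `q*(y) = e^{-E*(y)}/Z*` and
`q̂(y) = e^{-Ê(y)}/Ẑ` (with `Ẑ = ∫ e^{-Ê} dμ`) satisfy, for every `y`,
`|q*(y) − q̂(y)| ≤ 2(e^ξ − 1)/((2 − e^ξ)·Z*)`. -/
theorem boltzmann_density_perturbation
    {Y : Type*} [MeasurableSpace Y] (μ : Measure Y) [SigmaFinite μ]
    (Estar Ehat : Y → ℝ) (hEstar_meas : Measurable Estar) (hEhat_meas : Measurable Ehat)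
    (hEstar_nonneg : ∀ y, 0 ≤ Estar y)
    (ξ : ℝ) (hξ_pos : 0 < ξ) (hξ_lt : ξ < Real.log 2)
    (happrox : ∀ y, |Estar y - Ehat y| < ξ)
    (hZstar_int : Integrable (fun y => Real.exp (-Estar y)) μ)
    (hZstar_pos : 0 < ∫ y, Real.exp (-Estar y) ∂μ) :
    ∀ y, |Real.exp (-Estar y) / (∫ y', Real.exp (-Estar y') ∂μ)
        - Real.exp (-Ehat y) / (∫ y', Real.exp (-Ehat y') ∂μ)|
      ≤ 2 * (Real.exp ξ - 1)
        / ((2 - Real.exp ξ) * ∫ y', Real.exp (-Estar y') ∂μ) := by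
  intro y
  exact (boltzmann_density_perturbation_general hZstar_int hZstar_pos
    hEhat_meas.aemeasurable (.of_forall fun x => (happrox x).le) (happrox y).le).trans <|
      exp_two_mul_sub_one_mul_le hξ_pos.le hξ_lt partitionFunction_nonneg <|
        (min_le_left _ _).trans (boltzmannDensity_le_one_div (hEstar_nonneg y))
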